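/- Let S² be the unit sphere in ℝ³. Let X be the subspace of S² × S² × S² consisting of triples (x, y, z) of pairwise distinct points, and let E ⊆ X be the subspace of those triples which in addition satisfy dist(x,y) = dist(y,z) = dist(z,x) (equilateral triangles). Then the inclusion map E → X is a homotopy equivalence. -/

import Mathlib

/-- The unit sphere `S²` in `ℝ³`. -/
abbrev Sph : Type := Metric.sphere (0 : EuclideanSpace ℝ (Fin 3)) 1

/-- The space `X` of triples of pairwise distinct points of `S²`. -/
def distinctTriples : Set (Sph × Sph × Sph) :=
  {p | p.1 ≠ p.2.1 ∧ p.1 ≠ p.2.2 ∧ p.2.1 ≠ p.2.2}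

/-- The subspace `E ⊆ X` of equilateral triples. -/
def equilateralTriples : Set (Sph × Sph × Sph) :=
  {p | (p.1 ≠ p.2.1 ∧ p.1 ≠ p.2.2 ∧ p.2.1 ≠ p.2.2) ∧
       dist p.1 p.2.1 = dist p.2.1 p.2.2 ∧ dist p.2.1 p.2.2 = dist p.2.2 p.1}

lemma equilateral_subset_distinct : equilateralTriples ⊆ distinctTriples :=
  fun _ hp => hp.1


open scoped RealInnerProductSpace

noncomputable section

abbrev V3 : Type := EuclideanSpace ℝ (Fin 3)

/-- stereographic projection from `x` -/
def sg (x y : V3) : V3 := (1 - ⟪x, y⟫)⁻¹ • (y - ⟪x, y⟫ • x)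

/-- inverse stereographic projection -/
def ta (x Y : V3) : V3 := (‖Y‖ ^ 2 + 1)⁻¹ • ((2 : ℝ) • Y + (‖Y‖ ^ 2 - 1) • x)

lemma sg_orth (x y : V3) (hx : ‖x‖ = 1) : ⟪x, sg x y⟫ = 0 := by
  simp [sg, inner_smul_right, inner_sub_right, hx]

lemma inner_lt (x y : V3) (hx : ‖x‖ = 1) (hy : ‖y‖ = 1) (h : x ≠ y) : ⟪x, y⟫ < 1 :=
  (inner_lt_one_iff_real_of_norm_eq_one hx hy).2 h

lemma sg_norm (x y : V3) (hx : ‖x‖ = 1) (hy : ‖y‖ = 1) (h : x ≠ y) :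
    ‖sg x y‖ ^ 2 = (1 + ⟪x, y⟫) / (1 - ⟪x, y⟫) := by
  have h1 := inner_lt x y hx hy h
  have h2 : (1 - ⟪x, y⟫) ≠ 0 := by linarith
  rw [sg, norm_smul, mul_pow, norm_sub_sq_real, inner_smul_right, norm_smul, hx, hy,
    real_inner_comm x y, norm_inv, Real.norm_eq_abs, Real.norm_eq_abs, inv_pow, sq_abs, mul_pow,
    sq_abs]
  field_simp
  ring

lemma ta_sg (x y : V3) (hx : ‖x‖ = 1) (hy : ‖y‖ = 1) (h : x ≠ y) : ta x (sg x y) = y := by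
  have h1 := inner_lt x y hx hy h
  have h2 : (1 - ⟪x, y⟫) ≠ 0 := by linarith
  rw [ta, sg_norm x y hx hy h, sg]
  generalize ⟪x, y⟫ = c at *
  have e1 : ((1 + c) / (1 - c) + 1)⁻¹ = (1 - c) / 2 := by
    rw [show (1 + c) / (1 - c) + 1 = 2 / (1 - c) by field_simp; ring, inv_div]
  rw [e1]
  match_scalars
  · field_simp
  · field_simp
    ring

lemma ta_norm (x Y : V3) (hx : ‖x‖ = 1) (hY : ⟪x, Y⟫ = 0) : ‖ta x Y‖ = 1 := by
  have : ‖ta x Y‖ ^ 2 = 1 := by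
    rw [ta, norm_smul, mul_pow, norm_add_sq_real, inner_smul_right, inner_smul_left, norm_smul,
      norm_smul, hx, real_inner_comm, hY, norm_inv, Real.norm_eq_abs, Real.norm_eq_abs,
      Real.norm_eq_abs, inv_pow, sq_abs, mul_pow, mul_pow, sq_abs, sq_abs]
    have : ‖Y‖ ^ 2 + 1 ≠ 0 := by positivity
    field_simp
    ring
  exact (pow_eq_one_iff_of_nonneg (norm_nonneg _) two_ne_zero).1 this

lemma ta_dist1 (x Y : V3) (hx : ‖x‖ = 1) (hY : ⟪x, Y⟫ = 0) :
    ‖x - ta x Y‖ ^ 2 = 4 / (‖Y‖ ^ 2 + 1) := by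
  rw [norm_sub_sq_real, ta_norm x Y hx hY, hx, ta, inner_smul_right, inner_add_right,
    inner_smul_right, inner_smul_right, hY, real_inner_self_eq_norm_sq, hx]
  have : ‖Y‖ ^ 2 + 1 ≠ 0 := by positivity
  field_simp
  ring

lemma ta_dist2 (x Y Z : V3) (hx : ‖x‖ = 1) (hY : ⟪x, Y⟫ = 0) (hZ : ⟪x, Z⟫ = 0) :
    ‖ta x Y - ta x Z‖ ^ 2 = 4 * ‖Y - Z‖ ^ 2 / ((‖Y‖ ^ 2 + 1) * (‖Z‖ ^ 2 + 1)) := by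
  have hYx : ⟪Y, x⟫ = 0 := by rw [real_inner_comm, hY]
  rw [norm_sub_sq_real, ta_norm x Y hx hY, ta_norm x Z hx hZ, norm_sub_sq_real, ta, ta]
  simp only [inner_smul_right, inner_smul_left, inner_add_right, inner_add_left, hYx, hZ,
    real_inner_self_eq_norm_sq, hx, conj_trivial]
  have : ‖Y‖ ^ 2 + 1 ≠ 0 := by positivity
  have : ‖Z‖ ^ 2 + 1 ≠ 0 := by positivity
  field_simp
  ring

/-- scaling factor -/
def kk (s : ℝ) (D : V3) : ℝ := √(s ^ 2 + (1 - s ^ 2) / (3 * ‖D‖ ^ 2))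

def mid (Y Z : V3) : V3 := (1 / 2 : ℝ) • (Y + Z)
def dif (Y Z : V3) : V3 := (1 / 2 : ℝ) • (Y - Z)

def YY (s : ℝ) (Y Z : V3) : V3 := s • mid Y Z + kk s (dif Y Z) • dif Y Z
def ZZ (s : ℝ) (Y Z : V3) : V3 := s • mid Y Z - kk s (dif Y Z) • dif Y Z

lemma kk_sq (s : ℝ) (h0 : 0 ≤ s) (h1 : s ≤ 1) (D : V3) (hD : D ≠ 0) :
    (kk s D) ^ 2 * ‖D‖ ^ 2 = s ^ 2 * ‖D‖ ^ 2 + (1 - s ^ 2) / 3 := by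
  have hn : 0 < ‖D‖ := norm_pos_iff.2 hD
  have : 0 ≤ 1 - s ^ 2 := by nlinarith
  rw [kk, Real.sq_sqrt (by positivity)]
  field_simp

lemma kk_one (D : V3) : kk 1 D = 1 := by simp [kk]

lemma YY_one (Y Z : V3) : YY 1 Y Z = Y := by
  rw [YY, kk_one, mid, dif]; module

lemma ZZ_one (Y Z : V3) : ZZ 1 Y Z = Z := by
  rw [ZZ, kk_one, mid, dif]; module

lemma dif_ne (Y Z : V3) (h : Y ≠ Z) : dif Y Z ≠ 0 := by
  rw [dif]; exact smul_ne_zero (by norm_num) (sub_ne_zero.2 h)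

lemma YZ_sub (s : ℝ) (h0 : 0 ≤ s) (h1 : s ≤ 1) (Y Z : V3) (h : Y ≠ Z) :
    ‖YY s Y Z - ZZ s Y Z‖ ^ 2 = 4 * (s ^ 2 * ‖dif Y Z‖ ^ 2 + (1 - s ^ 2) / 3) := by
  rw [← kk_sq s h0 h1 _ (dif_ne Y Z h), YY, ZZ, add_sub_sub_cancel, ← two_smul ℝ, norm_smul,
    norm_smul, Real.norm_eq_abs, Real.norm_eq_abs, mul_pow, mul_pow, sq_abs, sq_abs]
  ring

lemma YZ_sub_pos (s : ℝ) (h0 : 0 ≤ s) (h1 : s ≤ 1) (Y Z : V3) (h : Y ≠ Z) :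
    0 < ‖YY s Y Z - ZZ s Y Z‖ ^ 2 := by
  rw [YZ_sub s h0 h1 Y Z h]
  have hn : 0 < ‖dif Y Z‖ ^ 2 := by have := norm_pos_iff.2 (dif_ne Y Z h); positivity
  have : 0 ≤ 1 - s ^ 2 := by nlinarith
  rcases h0.eq_or_lt with rfl | h0
  · norm_num
  · positivity

lemma YY_norm (s : ℝ) (h0 : 0 ≤ s) (h1 : s ≤ 1) (Y Z : V3) (h : Y ≠ Z) :
    ‖YY s Y Z‖ ^ 2 = s ^ 2 * ‖mid Y Z‖ ^ 2 + 2 * (s * kk s (dif Y Z) * ⟪mid Y Z, dif Y Z⟫)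
      + (s ^ 2 * ‖dif Y Z‖ ^ 2 + (1 - s ^ 2) / 3) := by
  rw [← kk_sq s h0 h1 _ (dif_ne Y Z h), YY, norm_add_sq_real, norm_smul, norm_smul,
    inner_smul_left, inner_smul_right, Real.norm_eq_abs, Real.norm_eq_abs, mul_pow, mul_pow,
    sq_abs, sq_abs, conj_trivial]
  ring

lemma ZZ_norm (s : ℝ) (h0 : 0 ≤ s) (h1 : s ≤ 1) (Y Z : V3) (h : Y ≠ Z) :
    ‖ZZ s Y Z‖ ^ 2 = s ^ 2 * ‖mid Y Z‖ ^ 2 - 2 * (s * kk s (dif Y Z) * ⟪mid Y Z, dif Y Z⟫)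
      + (s ^ 2 * ‖dif Y Z‖ ^ 2 + (1 - s ^ 2) / 3) := by
  rw [← kk_sq s h0 h1 _ (dif_ne Y Z h), ZZ, norm_sub_sq_real, norm_smul, norm_smul,
    inner_smul_left, inner_smul_right, Real.norm_eq_abs, Real.norm_eq_abs, mul_pow, mul_pow,
    sq_abs, sq_abs, conj_trivial]
  ring

/-- Equilaterality in stereographic coordinates. -/
def EqTri (Y Z : V3) : Prop := ‖Y‖ ^ 2 = ‖Z‖ ^ 2 ∧ ‖Y - Z‖ ^ 2 = ‖Z‖ ^ 2 + 1

lemma EqTri_zero (Y Z : V3) (h : Y ≠ Z) : EqTri (YY 0 Y Z) (ZZ 0 Y Z) := by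
  rw [EqTri, YY_norm 0 le_rfl zero_le_one Y Z h, ZZ_norm 0 le_rfl zero_le_one Y Z h,
    YZ_sub 0 le_rfl zero_le_one Y Z h]
  norm_num

lemma EqTri_pres (s : ℝ) (h0 : 0 ≤ s) (h1 : s ≤ 1) (Y Z : V3) (h : Y ≠ Z) (hE : EqTri Y Z) :
    EqTri (YY s Y Z) (ZZ s Y Z) := by
  have hE2 : EqTri (YY 1 Y Z) (ZZ 1 Y Z) := by rwa [YY_one, ZZ_one]
  rw [EqTri, YY_norm 1 zero_le_one le_rfl Y Z h, ZZ_norm 1 zero_le_one le_rfl Y Z h,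
    YZ_sub 1 zero_le_one le_rfl Y Z h, kk_one] at hE2
  rw [EqTri, YY_norm s h0 h1 Y Z h, ZZ_norm s h0 h1 Y Z h, YZ_sub s h0 h1 Y Z h]
  obtain ⟨a, b⟩ := hE2
  have hi : ⟪mid Y Z, dif Y Z⟫ = 0 := by linarith
  rw [hi] at b ⊢
  refine ⟨by ring, ?_⟩
  linear_combination s ^ 2 * b

lemma equi_iff (x Y Z : V3) (hx : ‖x‖ = 1) (hY : ⟪x, Y⟫ = 0) (hZ : ⟪x, Z⟫ = 0) :
    (dist x (ta x Y) = dist (ta x Y) (ta x Z) ∧ dist (ta x Y) (ta x Z) = dist (ta x Z) x)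
      ↔ EqTri Y Z := by
  rw [dist_comm (ta x Z) x]
  simp only [dist_eq_norm]
  rw [← sq_eq_sq₀ (norm_nonneg _) (norm_nonneg _), ← sq_eq_sq₀ (norm_nonneg _) (norm_nonneg _),
    ta_dist1 x Y hx hY, ta_dist1 x Z hx hZ, ta_dist2 x Y Z hx hY hZ, EqTri]
  have p1 : ‖Y‖ ^ 2 + 1 ≠ 0 := by positivity
  have p2 : ‖Z‖ ^ 2 + 1 ≠ 0 := by positivity
  rw [div_eq_div_iff p1 (by positivity), div_eq_div_iff (by positivity) p2]
  constructor
  · rintro ⟨a, b⟩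
    have a2 : ‖Z‖ ^ 2 + 1 = ‖Y - Z‖ ^ 2 := by
      apply mul_left_cancel₀ p1; linarith
    have b2 : ‖Y - Z‖ ^ 2 = ‖Y‖ ^ 2 + 1 := by
      apply mul_right_cancel₀ p2; linarith
    exact ⟨by linarith, by linarith⟩
  · rintro ⟨a, b⟩
    rw [b, a]
    constructor <;> ring

lemma YY_orth (s : ℝ) (x Y Z : V3) (hY : ⟪x, Y⟫ = 0) (hZ : ⟪x, Z⟫ = 0) :
    ⟪x, YY s Y Z⟫ = 0 := by
  simp [YY, mid, dif, inner_add_right, inner_sub_right, inner_smul_right, hY, hZ]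

lemma ZZ_orth (s : ℝ) (x Y Z : V3) (hY : ⟪x, Y⟫ = 0) (hZ : ⟪x, Z⟫ = 0) :
    ⟪x, ZZ s Y Z⟫ = 0 := by
  simp [ZZ, mid, dif, inner_add_right, inner_sub_right, inner_smul_right, hY, hZ]

lemma sph_norm (x : Sph) : ‖(x : V3)‖ = 1 := by simp

def pY (p : Sph × Sph × Sph) : V3 := sg p.1 p.2.1
def pZ (p : Sph × Sph × Sph) : V3 := sg p.1 p.2.2

lemma pY_orth (p) : ⟪(p.1 : V3), pY p⟫ = 0 := sg_orth _ _ (sph_norm _)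
lemma pZ_orth (p) : ⟪(p.1 : V3), pZ p⟫ = 0 := sg_orth _ _ (sph_norm _)

lemma ta_pY {p} (hp : p ∈ distinctTriples) : ta p.1 (pY p) = p.2.1 :=
  ta_sg _ _ (sph_norm _) (sph_norm _) (fun h => hp.1 (Subtype.ext h))
lemma ta_pZ {p} (hp : p ∈ distinctTriples) : ta p.1 (pZ p) = p.2.2 :=
  ta_sg _ _ (sph_norm _) (sph_norm _) (fun h => hp.2.1 (Subtype.ext h))

lemma pYZ {p} (hp : p ∈ distinctTriples) : pY p ≠ pZ p := by
  intro h
  apply hp.2.2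
  apply Subtype.ext
  rw [← ta_pY hp, ← ta_pZ hp, h]

/-- The deformation. -/
def HH (s : ℝ) (p : Sph × Sph × Sph) : Sph × Sph × Sph :=
  (p.1, ⟨ta p.1 (YY s (pY p) (pZ p)), by
      simpa using ta_norm _ _ (sph_norm p.1) (YY_orth s _ _ _ (pY_orth p) (pZ_orth p))⟩,
    ⟨ta p.1 (ZZ s (pY p) (pZ p)), by
      simpa using ta_norm _ _ (sph_norm p.1) (ZZ_orth s _ _ _ (pY_orth p) (pZ_orth p))⟩)

lemma HH_one {p} (hp : p ∈ distinctTriples) : HH 1 p = p := by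
  refine Prod.ext rfl (Prod.ext (Subtype.ext ?_) (Subtype.ext ?_))
  · simp only [HH, YY_one, ta_pY hp]
  · simp only [HH, ZZ_one, ta_pZ hp]

lemma ne_of_normsq {x y : V3} (h : 0 < ‖x - y‖ ^ 2) : x ≠ y := by
  rintro rfl
  simp at h

lemma HH_mem (s : ℝ) (h0 : 0 ≤ s) (h1 : s ≤ 1) {p} (hp : p ∈ distinctTriples) :
    HH s p ∈ distinctTriples := by
  have oY := YY_orth s _ _ _ (pY_orth p) (pZ_orth p)
  have oZ := ZZ_orth s _ _ _ (pY_orth p) (pZ_orth p)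
  refine ⟨fun h => ?_, fun h => ?_, fun h => ?_⟩
  · refine ne_of_normsq ?_ (congrArg Subtype.val h)
    simp only [HH]
    rw [ta_dist1 _ _ (sph_norm _) oY]
    positivity
  · refine ne_of_normsq ?_ (congrArg Subtype.val h)
    simp only [HH]
    rw [ta_dist1 _ _ (sph_norm _) oZ]
    positivity
  · refine ne_of_normsq ?_ (congrArg Subtype.val h)
    simp only [HH]
    rw [ta_dist2 _ _ _ (sph_norm _) oY oZ]
    have := YZ_sub_pos s h0 h1 _ _ (pYZ hp)
    positivity

lemma HH_mem_E (s : ℝ) (h0 : 0 ≤ s) (h1 : s ≤ 1) {p} (hp : p ∈ distinctTriples)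
    (h : EqTri (YY s (pY p) (pZ p)) (ZZ s (pY p) (pZ p))) :
    HH s p ∈ equilateralTriples :=
  ⟨HH_mem s h0 h1 hp, (equi_iff _ _ _ (sph_norm p.1) (YY_orth s _ _ _ (pY_orth p) (pZ_orth p))
    (ZZ_orth s _ _ _ (pY_orth p) (pZ_orth p))).2 h⟩

lemma HH_zero_mem {p} (hp : p ∈ distinctTriples) : HH 0 p ∈ equilateralTriples :=
  HH_mem_E 0 le_rfl zero_le_one hp (EqTri_zero _ _ (pYZ hp))

lemma HH_pres (s : ℝ) (h0 : 0 ≤ s) (h1 : s ≤ 1) {p} (hp : p ∈ equilateralTriples) :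
    HH s p ∈ equilateralTriples := by
  have hd := equilateral_subset_distinct hp
  refine HH_mem_E s h0 h1 hd (EqTri_pres s h0 h1 _ _ (pYZ hd) ?_)
  rw [← equi_iff _ _ _ (sph_norm p.1) (pY_orth p) (pZ_orth p), ta_pY hd, ta_pZ hd]
  exact hp.2

lemma HH_cont : Continuous (fun q : ℝ × distinctTriples => HH q.1 q.2) := by
  have c1 : Continuous (fun q : ℝ × distinctTriples => (q.2.1.1 : V3)) := by fun_prop
  have c2 : Continuous (fun q : ℝ × distinctTriples => (q.2.1.2.1 : V3)) := by fun_prop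
  have c3 : Continuous (fun q : ℝ × distinctTriples => (q.2.1.2.2 : V3)) := by fun_prop
  have cY : Continuous (fun q : ℝ × distinctTriples => pY q.2) := by
    unfold pY sg
    refine Continuous.fun_smul (Continuous.fun_inv₀ ?_ ?_) ?_
    · fun_prop
    rotate_left
    · fun_prop
    intro q
    have := inner_lt _ _ (sph_norm q.2.1.1) (sph_norm q.2.1.2.1)
      (fun h => q.2.2.1 (Subtype.ext h))
    linarith
  have cZ : Continuous (fun q : ℝ × distinctTriples => pZ q.2) := by
    unfold pZ sg
    refine Continuous.fun_smul (Continuous.fun_inv₀ ?_ ?_) ?_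
    · fun_prop
    rotate_left
    · fun_prop
    intro q
    have := inner_lt _ _ (sph_norm q.2.1.1) (sph_norm q.2.1.2.2)
      (fun h => q.2.2.2.1 (Subtype.ext h))
    linarith
  have cM : Continuous (fun q : ℝ × distinctTriples => mid (pY q.2) (pZ q.2)) := by
    unfold mid; fun_prop
  have cD : Continuous (fun q : ℝ × distinctTriples => dif (pY q.2) (pZ q.2)) := by
    unfold dif; fun_prop
  have ck : Continuous (fun q : ℝ × distinctTriples => kk q.1 (dif (pY q.2) (pZ q.2))) := by
    unfold kk
    refine Real.continuous_sqrt.comp (Continuous.add (by fun_prop)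
      (Continuous.div (by fun_prop) (by fun_prop) ?_))
    intro q
    have := norm_pos_iff.2 (dif_ne _ _ (pYZ q.2.2))
    positivity
  have cYY : Continuous (fun q : ℝ × distinctTriples => YY q.1 (pY q.2) (pZ q.2)) := by
    unfold YY; fun_prop
  have cZZ : Continuous (fun q : ℝ × distinctTriples => ZZ q.1 (pY q.2) (pZ q.2)) := by
    unfold ZZ; fun_prop
  have cta : ∀ f : ℝ × distinctTriples → V3, Continuous f →
      Continuous (fun q => ta q.2.1.1 (f q)) := by
    intro f hf
    unfold ta
    refine Continuous.fun_smul (Continuous.fun_inv₀ ?_ ?_) ?_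
    · fun_prop
    rotate_left
    · fun_prop
    intro q
    positivity
  unfold HH
  exact Continuous.prodMk (by fun_prop)
    (Continuous.prodMk ((cta _ cYY).subtype_mk _) ((cta _ cZZ).subtype_mk _))

/-- The inclusion `E → X` of the space of equilateral triples of points of `S²` into
the space of pairwise distinct triples is a homotopy equivalence. -/
theorem stmt17 :
    ∃ r : C(distinctTriples, equilateralTriples),
      ((⟨Set.inclusion equilateral_subset_distinct,
          continuous_inclusion equilateral_subset_distinct⟩ :
            C(equilateralTriples, distinctTriples)).comp r).Homotopic
        (ContinuousMap.id distinctTriples) ∧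
      (r.comp (⟨Set.inclusion equilateral_subset_distinct,
          continuous_inclusion equilateral_subset_distinct⟩ :
            C(equilateralTriples, distinctTriples))).Homotopic
        (ContinuousMap.id equilateralTriples) := by
  refine ⟨⟨fun p => ⟨HH 0 p, HH_zero_mem p.2⟩, ?_⟩, ⟨⟨⟨fun q => ⟨HH q.1 q.2,
    HH_mem _ q.1.2.1 q.1.2.2 q.2.2⟩, ?_⟩, ?_, ?_⟩⟩, ⟨⟨⟨fun q => ⟨HH q.1 q.2,
    HH_pres _ q.1.2.1 q.1.2.2 q.2.2⟩, ?_⟩, ?_, ?_⟩⟩⟩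
  · exact (HH_cont.comp (continuous_const.prodMk continuous_id)).subtype_mk _
  · exact (HH_cont.comp ((continuous_subtype_val.comp continuous_fst).prodMk
      continuous_snd)).subtype_mk _
  · intro p
    rfl
  · intro p
    exact Subtype.ext (HH_one p.2)
  · exact (HH_cont.comp ((continuous_subtype_val.comp continuous_fst).prodMk
      ((continuous_inclusion equilateral_subset_distinct).comp continuous_snd))).subtype_mk _
  · intro p
    rfl
  · intro p
    exact Subtype.ext (HH_one (equilateral_subset_distinct p.2))
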